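/- Let q be a real number with q > 1 and let N be a positive integer. Then ∑_λ q^{−(2n(λ)+|λ|)} · ∏_{s∈λ} (1 − q^{−(N + c(s))}) / (1 − q^{−h(s)})² = ∏_{r=1}^N ∏_{t=0}^∞ 1/(1 − q^{−(r+t)}), where the sum is over all partitions λ of all nonnegative integers and both sides converge. (The summand vanishes whenever λ has more than N parts.) -/

import Mathlib

/-- The hook length of the cell `s = (i,j)` of a Young diagram (0-indexed cells). -/
def hookLen (μ : YoungDiagram) (s : ℕ × ℕ) : ℕ :=
  (μ.rowLen s.1 - s.2 - 1) + (μ.colLen s.2 - s.1 - 1) + 1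

/-- `n(λ) = ∑_i (i−1)λ_i`, i.e. the sum over all cells of the (0-indexed) row index. -/
def nstat (μ : YoungDiagram) : ℕ := ∑ s ∈ μ.cells, s.1

/-!
Put `x = q⁻¹` and encode a partition `λ` with at most `N` parts by its beta numbers
`lᵢ = λᵢ + N - i`, a strictly decreasing tuple. In each row the hook lengths and the differences
`lᵢ - lₖ` (`k > i`) together exhaust `1, …, lᵢ`, and the contents give `(x; x)_{lᵢ}` up to a
factor independent of `λ`. Up to such a factor the summand is therefore
`∏ᵢ x^{lᵢ} / (x; x)_{lᵢ}` times the square of the Vandermonde determinant of the `x^{lᵢ}`.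

By the Cauchy–Binet (Andréief) formula the sum is a determinant of moments of the weight
`xˡ / (x; x)_l` on the points `y = xˡ`. Writing one Vandermonde determinant in the basis `yⁱ` and
the other in the basis `∏_{k < j} (y - xᵏ)` kills the terms `l < j`, so each moment is Euler's
series `∑ aˡ / (x; x)_l = ∏ₖ (1 - a xᵏ)⁻¹` at `a = x^{i+1}` times an explicit monomial, and the
determinant splits into row factors, column factors and the Vandermonde determinant of
`1, x, …, x^{N-1}`.
-/

open Finset Filter Topology

lemma hasProd_prod_of_fintype {ι β M : Type*} [Fintype ι] [CommMonoid M] [TopologicalSpace M]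
    [ContinuousMul M] {f : ι → β → M} {s : ι → M} (hf : ∀ i, HasProd (f i) (s i)) :
    HasProd (fun p : ι × β => f p.1 p.2) (∏ i, s i) := by
  classical
  have hrow (i : ι) : HasProd (fun p : ι × β => if p.1 = i then f i p.2 else 1) (s i) := by
    refine ((Prod.mk_right_injective i).hasProd_iff fun p hp => if_neg ?_).mp
      (by simpa [Function.comp_def] using hf i)
    rintro rfl
    exact hp ⟨p.2, rfl⟩
  simpa using hasProd_prod fun i (_ : i ∈ univ) => hrow i

section CauchyBinet

variable {ι R α : Type*} {n : ℕ}

lemma summable_norm_prod_pi [NormedCommRing R] {f : Fin n → α → R}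
    (hf : ∀ i, Summable fun a => ‖f i a‖) :
    Summable fun l : Fin n → α => ‖∏ i, f i (l i)‖ := by
  induction n with
  | zero => exact .of_finite
  | succ n ih =>
    rw [← (Fin.consEquiv fun _ => α).summable_iff]
    refine ((hf 0).mul_norm (ih fun i => hf i.succ)).congr fun p => ?_
    simp [Fin.prod_univ_succ, Fin.consEquiv]

lemma hasSum_prod_pi [NormedCommRing R] {f : Fin n → α → R} {s : Fin n → R}
    (hf : ∀ i, HasSum (f i) (s i)) (hf' : ∀ i, Summable fun a => ‖f i a‖) :
    HasSum (fun l : Fin n → α => ∏ i, f i (l i)) (∏ i, s i) := by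
  induction n with
  | zero => simp
  | succ n ih =>
    rw [← (Fin.consEquiv fun _ => α).hasSum_iff, Fin.prod_univ_succ]
    have htail := ih (fun i => hf i.succ) fun i => hf' i.succ
    have hsummable := summable_mul_of_summable_norm' (hf' 0) (hf 0).summable
      (summable_norm_prod_pi fun i => hf' i.succ) htail.summable
    refine ((hf 0).mul htail hsummable).congr_fun fun p => ?_
    simp [Fin.prod_univ_succ, Fin.consEquiv]

lemma hasSum_prod_mul_det [NormedCommRing R] {φ ψ : Fin n → α → R}
    {M : Matrix (Fin n) (Fin n) R} (hM : ∀ i j, HasSum (fun a => φ i a * ψ j a) (M i j))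
    (hM' : ∀ i j, Summable fun a => ‖φ i a * ψ j a‖) :
    HasSum (fun l : Fin n → α => (∏ i, φ i (l i)) * (Matrix.of fun i j => ψ j (l i)).det)
      M.det := by
  simp_rw [← Matrix.det_transpose M, ← Matrix.det_transpose (Matrix.of _), Matrix.det_apply',
    mul_sum]
  refine hasSum_sum fun σ _ => ?_
  refine ((hasSum_prod_pi (fun i => hM i (σ i)) fun i => hM' i (σ i)).mul_left _).congr_fun
    fun l => ?_
  rw [prod_mul_distrib]
  simp only [Matrix.transpose_apply, Matrix.of_apply]
  ring

lemma sum_perm_prod_mul_det [CommRing R] [Fintype ι] [DecidableEq ι] (φ ψ : ι → α → R)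
    (l : ι → α) :
    ∑ σ : Equiv.Perm ι, (∏ i, φ i (l (σ i))) * (Matrix.of fun i j => ψ j (l (σ i))).det =
      (Matrix.of fun i j => φ j (l i)).det * (Matrix.of fun i j => ψ j (l i)).det := by
  rw [Matrix.det_apply', sum_mul]
  refine sum_congr rfl fun σ _ => ?_
  have hperm : (Matrix.of fun i j => ψ j (l (σ i))).det =
      (Equiv.Perm.sign σ : ℤ) * (Matrix.of fun i j => ψ j (l i)).det :=
    Matrix.det_permute σ (Matrix.of fun i j => ψ j (l i))
  rw [hperm]
  simp only [Matrix.of_apply]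
  ring

lemma injective_strictAnti_comp_perm [LinearOrder α] :
    Function.Injective fun p : {l : Fin n → α // StrictAnti l} × Equiv.Perm (Fin n) =>
      p.1.1 ∘ p.2 := by
  rintro ⟨⟨k, hk⟩, σ⟩ ⟨⟨l, hl⟩, τ⟩ (h : k ∘ σ = l ∘ τ)
  have hkl : k = l ∘ (τ * σ⁻¹ : Equiv.Perm (Fin n)) := by
    simpa [Function.comp_assoc, Equiv.Perm.coe_mul] using congrArg (· ∘ ⇑σ⁻¹) h
  have hkl' : k = l := hkl.trans <|
    Tuple.unique_antitone (τ := 1) (hkl ▸ hk.antitone) hl.antitone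
  subst hkl'
  have hστ : σ = τ := Equiv.ext fun i => hk.injective (congrFun h i)
  rw [hστ]

lemma exists_strictAnti_comp_perm_eq [LinearOrder α] {f : Fin n → α}
    (hf : Function.Injective f) :
    ∃ (l : Fin n → α) (σ : Equiv.Perm (Fin n)), StrictAnti l ∧ l ∘ σ = f := by
  have hsort : StrictMono (f ∘ Tuple.sort f) :=
    (Tuple.monotone_sort f).strictMono_of_injective (hf.comp (Tuple.sort f).injective)
  refine ⟨f ∘ Tuple.sort f ∘ Fin.rev, (Tuple.sort f)⁻¹.trans Fin.revPerm,
    hsort.comp_strictAnti Fin.rev_strictAnti, ?_⟩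
  ext i
  simp

theorem hasSum_det_mul_det [NormedCommRing R] [LinearOrder α] {φ ψ : Fin n → α → R}
    {M : Matrix (Fin n) (Fin n) R} (hM : ∀ i j, HasSum (fun a => φ i a * ψ j a) (M i j))
    (hM' : ∀ i j, Summable fun a => ‖φ i a * ψ j a‖) :
    HasSum (fun l : {l : Fin n → α // StrictAnti l} =>
      (Matrix.of fun i j => φ j (l.1 i)).det * (Matrix.of fun i j => ψ j (l.1 i)).det) M.det := by
  have htuple := hasSum_prod_mul_det hM hM'
  rw [← injective_strictAnti_comp_perm.hasSum_iff] at htuple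
  · refine (htuple.prod_fiberwise fun l => hasSum_fintype _).congr_fun fun l => ?_
    exact (sum_perm_prod_mul_det φ ψ l.1).symm
  · intro f hf
    have hf' : ¬ Function.Injective f := fun hinj => by
      obtain ⟨l, σ, hl, rfl⟩ := exists_strictAnti_comp_perm_eq hinj
      exact hf ⟨(⟨l, hl⟩, σ), rfl⟩
    obtain ⟨i, k, hik, hne⟩ := Function.not_injective_iff.mp hf'
    rw [Matrix.det_zero_of_row_eq hne (funext fun j => congrArg (ψ j) hik), mul_zero]

end CauchyBinet

/-- The finite q-Pochhammer symbol `(a; x)_n = (1 - a)(1 - ax)⋯(1 - axⁿ⁻¹)`. -/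
def qPochhammer {R : Type*} [CommRing R] (a x : R) (n : ℕ) : R :=
  ∏ k ∈ range n, (1 - a * x ^ k)

section qPochhammer

variable {R : Type*} [CommRing R]

@[simp]
lemma qPochhammer_zero (a x : R) : qPochhammer a x 0 = 1 := prod_range_zero _

lemma qPochhammer_succ (a x : R) (n : ℕ) :
    qPochhammer a x (n + 1) = qPochhammer a x n * (1 - a * x ^ n) := prod_range_succ _ n

lemma qPochhammer_add (a x : R) (m n : ℕ) :
    qPochhammer a x (m + n) = qPochhammer a x m * qPochhammer (a * x ^ m) x n := by
  simp only [qPochhammer, prod_range_add, mul_assoc, pow_add]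

lemma qPochhammer_self_eq_prod_pow_sub (x : R) (n : ℕ) :
    qPochhammer x x n = ∏ m ∈ range n, (1 - x ^ (n - m)) := by
  rw [qPochhammer, ← prod_range_reflect]
  refine prod_congr rfl fun m hm => ?_
  rw [← pow_succ', show n - 1 - m + 1 = n - m by rw [mem_range] at hm; lia]

lemma prod_range_pow_sub_pow (x : R) (m n : ℕ) :
    ∏ k ∈ range n, (x ^ (m + n) - x ^ k) =
      (∏ k ∈ range n, -x ^ k) * qPochhammer (x ^ (m + 1)) x n := by
  rw [qPochhammer, ← prod_range_reflect (fun k => 1 - x ^ (m + 1) * x ^ k), ← prod_mul_distrib]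
  refine prod_congr rfl fun k hk => ?_
  rw [mem_range] at hk
  rw [← pow_add, show m + n = k + (m + 1 + (n - 1 - k)) by lia, pow_add x k]
  ring

lemma sq_prod_range_neg_pow_mul_pow (x : R) (n : ℕ) :
    (∏ k ∈ range n, -x ^ k) ^ 2 * x ^ n = x ^ (n ^ 2) := by
  induction n with
  | zero => simp
  | succ n ih =>
    rw [prod_range_succ, show (n + 1) ^ 2 = n ^ 2 + (2 * n + 1) by ring, pow_add x (n ^ 2), ← ih]
    ring

end qPochhammer

section EulerSeries

variable {𝕜 : Type*} [NormedField 𝕜] {a x : 𝕜}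

lemma one_sub_ne_zero_of_norm_lt_one (ha : ‖a‖ < 1) : 1 - a ≠ 0 :=
  sub_ne_zero.mpr fun h => by simp [← h] at ha

lemma norm_mul_pow_lt_one (ha : ‖a‖ < 1) (hx : ‖x‖ ≤ 1) (n : ℕ) : ‖a * x ^ n‖ < 1 := by
  rw [norm_mul, norm_pow]
  exact mul_lt_one_of_nonneg_of_lt_one_left (norm_nonneg a) ha (pow_le_one₀ (norm_nonneg x) hx)

lemma qPochhammer_ne_zero (ha : ‖a‖ < 1) (hx : ‖x‖ ≤ 1) (n : ℕ) : qPochhammer a x n ≠ 0 :=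
  prod_ne_zero_iff.mpr fun k _ => one_sub_ne_zero_of_norm_lt_one (norm_mul_pow_lt_one ha hx k)

/-- Euler's series `∑ aˡ / (x; x)_l`, which represents `1 / (a; x)_∞`. -/
noncomputable def eulerSeries (x a : 𝕜) : 𝕜 := ∑' l : ℕ, a ^ l / qPochhammer x x l

lemma summable_norm_eulerSeries (hx : ‖x‖ < 1) (ha : ‖a‖ < 1) :
    Summable fun l : ℕ => ‖a ^ l / qPochhammer x x l‖ := by
  obtain ⟨r, har, hr⟩ := exists_between ha
  have hlim : Tendsto (fun l : ℕ => ‖a / (1 - x * x ^ l)‖) atTop (𝓝 ‖a‖) := by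
    have hpow := (tendsto_pow_atTop_nhds_zero_of_norm_lt_one hx).const_mul x
    simpa using ((tendsto_const_nhds (x := a)).div (hpow.const_sub 1) (by simp)).norm
  refine summable_of_ratio_norm_eventually_le hr ?_
  filter_upwards [hlim.eventually_le_const har] with l hl
  rw [norm_norm, norm_norm, pow_succ', qPochhammer_succ, mul_comm (qPochhammer x x l),
    mul_div_mul_comm, norm_mul]
  gcongr

variable [CompleteSpace 𝕜]

lemma eulerSeries_mul (hx : ‖x‖ < 1) (ha : ‖a‖ < 1) :
    eulerSeries x (a * x) = eulerSeries x a * (1 - a) := by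
  have hax : ‖a * x‖ < 1 := by simpa using norm_mul_pow_lt_one ha hx.le 1
  have hsum := (summable_norm_eulerSeries hx ha).of_norm
  have hsum' := (summable_norm_eulerSeries hx hax).of_norm
  have hterm (l : ℕ) : a ^ (l + 1) / qPochhammer x x (l + 1) -
      (a * x) ^ (l + 1) / qPochhammer x x (l + 1) = a * (a ^ l / qPochhammer x x l) := by
    have hfactor := one_sub_ne_zero_of_norm_lt_one (norm_mul_pow_lt_one hx hx.le l)
    have hpoch := qPochhammer_ne_zero hx hx.le l
    rw [qPochhammer_succ]
    field_simp
    ring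
  have hdiff : eulerSeries x a - eulerSeries x (a * x) = a * eulerSeries x a := by
    rw [eulerSeries, eulerSeries, ← hsum.tsum_sub hsum', (hsum.sub hsum').tsum_eq_zero_add]
    simp only [hterm, tsum_mul_left, pow_zero, sub_self, zero_add]
  linear_combination -hdiff

lemma eulerSeries_mul_pow (hx : ‖x‖ < 1) (ha : ‖a‖ < 1) (n : ℕ) :
    eulerSeries x (a * x ^ n) = eulerSeries x a * qPochhammer a x n := by
  induction n with
  | zero => simp
  | succ n ih =>
    rw [pow_succ, ← mul_assoc, eulerSeries_mul hx (norm_mul_pow_lt_one ha hx.le n), ih,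
      qPochhammer_succ, mul_assoc]

lemma tendsto_eulerSeries_mul_pow (hx : ‖x‖ < 1) (ha : ‖a‖ < 1) :
    Tendsto (fun n : ℕ => eulerSeries x (a * x ^ n)) atTop (𝓝 1) := by
  have hzero : ∑' l : ℕ, (0 : 𝕜) ^ l / qPochhammer x x l = 1 := by
    rw [tsum_eq_single 0 fun l hl => by simp [hl]]
    simp
  rw [← hzero]
  refine tendsto_tsum_of_dominated_convergence (summable_norm_eulerSeries hx ha) (fun l => ?_)
    (.of_forall fun n l => ?_)
  · have hpow := (tendsto_pow_atTop_nhds_zero_of_norm_lt_one hx).const_mul a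
    rw [mul_zero] at hpow
    exact (hpow.pow l).div_const _
  · rw [norm_div, norm_div, norm_pow, norm_pow, norm_mul, norm_pow]
    gcongr
    exact mul_le_of_le_one_right (norm_nonneg a) (pow_le_one₀ (norm_nonneg x) hx.le)

theorem hasProd_inv_one_sub_mul_pow (hx : ‖x‖ < 1) (ha : ‖a‖ < 1) :
    HasProd (fun k : ℕ => (1 - a * x ^ k)⁻¹) (eulerSeries x a) := by
  have hmul : Multipliable fun k : ℕ => 1 - a * x ^ k := by
    simp_rw [sub_eq_add_neg]
    refine multipliable_one_add_of_summable ?_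
    simpa [norm_mul, norm_pow] using
      (summable_geometric_of_lt_one (norm_nonneg x) hx).mul_left ‖a‖
  have hlim : eulerSeries x a * ∏' k : ℕ, (1 - a * x ^ k) = 1 := by
    refine tendsto_nhds_unique (hmul.tendsto_prod_tprod_nat.const_mul _) ?_
    exact (tendsto_eulerSeries_mul_pow hx ha).congr (eulerSeries_mul_pow hx ha)
  rw [eq_inv_of_mul_eq_one_left hlim]
  exact hmul.hasProd.inv₀ (right_ne_zero_of_mul_eq_one hlim)

end EulerSeries

section Vandermonde

variable {R : Type*} [CommRing R] {n : ℕ}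

lemma det_prod_range_sub_pow_eq_det_vandermonde (x : R) (v : Fin n → R) :
    (Matrix.of fun i j : Fin n => ∏ k ∈ range j, (v i - x ^ k)).det =
      (Matrix.vandermonde v).det := by
  nontriviality R
  rw [Matrix.det_eval_matrixOfPolynomials_eq_det_vandermonde v
    fun j => ∏ k ∈ range (j : ℕ), (Polynomial.X - Polynomial.C (x ^ k))]
  · simp only [Polynomial.eval_prod, Polynomial.eval_sub, Polynomial.eval_X, Polynomial.eval_C]
  · intro j
    rw [Polynomial.natDegree_finsetProd_X_sub_C_eq_card, card_range]
  · exact fun j => Polynomial.monic_prod_X_sub_C _ _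

lemma det_vandermonde_pow (x : R) :
    (Matrix.vandermonde fun i : Fin n => x ^ (i : ℕ)).det =
      ∏ j : Fin n, ((∏ k ∈ range j, -x ^ k) * qPochhammer x x j) := by
  rw [← det_prod_range_sub_pow_eq_det_vandermonde x, Matrix.det_of_isLowerTriangular]
  · refine prod_congr rfl fun j _ => ?_
    simpa using prod_range_pow_sub_pow x 0 j
  · intro i j (hij : i < j)
    exact prod_eq_zero (mem_range.mpr hij) (sub_self _)

lemma det_vandermonde_pow_of_antitone (x : R) {l : Fin n → ℕ} (hl : Antitone l) :
    (Matrix.vandermonde fun i => x ^ l i).det =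
      x ^ (∑ i, i * l i) * ∏ i, ∏ k ∈ Ioi i, (1 - x ^ (l i - l k)) := by
  have hfactor (i k : Fin n) (hk : k ∈ Ioi i) :
      x ^ l k - x ^ l i = x ^ l k * (1 - x ^ (l i - l k)) := by
    rw [mul_sub, mul_one, ← pow_add, Nat.add_sub_cancel' (hl (mem_Ioi.mp hk).le)]
  have hpow : ∏ i, ∏ k ∈ Ioi i, x ^ l k = x ^ (∑ k, k * l k) := by
    rw [prod_comm' (t' := univ) (s' := Iio) (by simp), ← prod_pow_eq_pow_sum]
    refine prod_congr rfl fun k _ => ?_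
    rw [prod_const, Fin.card_Iio, ← pow_mul, mul_comm]
  rw [Matrix.det_vandermonde, prod_congr rfl fun i _ => prod_congr rfl (hfactor i)]
  simp only [prod_mul_distrib, hpow]

end Vandermonde

section Moments

variable {𝕜 : Type*} [NormedField 𝕜] {x : 𝕜} {n : ℕ}

/-- The `l`-th term of the moment of `yⁱ ∏_{k < j} (y - xᵏ)` with respect to the weight
`xˡ / (x; x)_l` at the points `y = xˡ`. -/
def eulerMomentTerm (x : 𝕜) (i j l : ℕ) : 𝕜 :=
  x ^ l / qPochhammer x x l * (x ^ l) ^ i * ∏ k ∈ range j, (x ^ l - x ^ k)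

lemma eulerMomentTerm_eq_zero_of_lt (x : 𝕜) (i : ℕ) {j l : ℕ} (hl : l < j) :
    eulerMomentTerm x i j l = 0 := by
  rw [eulerMomentTerm, prod_eq_zero (mem_range.mpr hl) (sub_self _), mul_zero]

lemma eulerMomentTerm_add (hx : ‖x‖ < 1) (i j m : ℕ) :
    eulerMomentTerm x i j (m + j) =
      (x * x ^ i) ^ m / qPochhammer x x m * ((∏ k ∈ range j, -x ^ k) * x ^ j * (x ^ j) ^ i) := by
  have hpoch := qPochhammer_ne_zero hx hx.le m
  have hpoch' : qPochhammer (x * x ^ m) x j ≠ 0 :=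
    qPochhammer_ne_zero (norm_mul_pow_lt_one hx hx.le m) hx.le j
  rw [eulerMomentTerm, prod_range_pow_sub_pow, qPochhammer_add, pow_succ' x m]
  field_simp
  ring

lemma summable_norm_eulerMomentTerm (hx : ‖x‖ < 1) (i j : ℕ) :
    Summable fun l => ‖eulerMomentTerm x i j l‖ := by
  rw [← summable_nat_add_iff j]
  simp_rw [eulerMomentTerm_add hx, norm_mul]
  exact (summable_norm_eulerSeries hx (norm_mul_pow_lt_one hx hx.le i)).mul_right _

lemma det_eulerMoment :
    (Matrix.of fun i j : Fin n => eulerSeries x (x * x ^ (i : ℕ)) *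
        ((∏ k ∈ range j, -x ^ k) * x ^ (j : ℕ) * (x ^ (j : ℕ)) ^ (i : ℕ))).det =
      (∏ i : Fin n, eulerSeries x (x * x ^ (i : ℕ))) *
        ∏ j : Fin n, (qPochhammer x x j * x ^ ((j : ℕ) ^ 2)) := by
  have hvand := Matrix.det_mul_row (fun j : Fin n => (∏ k ∈ range j, -x ^ k) * x ^ (j : ℕ))
    (Matrix.vandermonde fun j : Fin n => x ^ (j : ℕ)).transpose
  rw [Matrix.det_transpose, det_vandermonde_pow, ← prod_mul_distrib] at hvand
  refine (Matrix.det_mul_column _ _).trans (congrArg _ (hvand.trans ?_))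
  refine prod_congr rfl fun j _ => ?_
  rw [← sq_prod_range_neg_pow_mul_pow x j]
  ring

variable [CompleteSpace 𝕜]

lemma hasSum_eulerMomentTerm (hx : ‖x‖ < 1) (i j : ℕ) :
    HasSum (eulerMomentTerm x i j)
      (eulerSeries x (x * x ^ i) * ((∏ k ∈ range j, -x ^ k) * x ^ j * (x ^ j) ^ i)) := by
  rw [← (add_left_injective j).hasSum_iff]
  · have hsum := (summable_norm_eulerSeries hx (norm_mul_pow_lt_one hx hx.le i)).of_norm.hasSum
    exact (hsum.mul_right _).congr_fun (eulerMomentTerm_add hx i j)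
  · intro l hl
    refine eulerMomentTerm_eq_zero_of_lt x i ?_
    by_contra! hjl
    exact hl ⟨l - j, Nat.sub_add_cancel hjl⟩

theorem hasSum_prod_mul_sq_det_vandermonde (hx : ‖x‖ < 1) :
    HasSum (fun l : {l : Fin n → ℕ // StrictAnti l} =>
        (∏ i, x ^ l.1 i / qPochhammer x x (l.1 i)) *
          (Matrix.vandermonde fun i => x ^ l.1 i).det ^ 2)
      ((∏ i : Fin n, eulerSeries x (x * x ^ (i : ℕ))) *
        ∏ j : Fin n, (qPochhammer x x j * x ^ ((j : ℕ) ^ 2))) := by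
  rw [← det_eulerMoment]
  refine (hasSum_det_mul_det (φ := fun (i : Fin n) l => x ^ l / qPochhammer x x l * (x ^ l) ^ i.1)
    (ψ := fun (j : Fin n) l => ∏ k ∈ range j, (x ^ l - x ^ k))
    (fun i j => hasSum_eulerMomentTerm hx i j)
    fun i j => summable_norm_eulerMomentTerm hx i j).congr_fun fun l => ?_
  rw [det_prod_range_sub_pow_eq_det_vandermonde x fun i => x ^ l.1 i, sq, ← mul_assoc]
  exact congrArg (· * _) (Matrix.det_mul_column _ _).symm

end Moments

section BetaNumbers

variable {μ : YoungDiagram} {N : ℕ}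

lemma lt_rowLen_iff_lt_colLen {i j : ℕ} : j < μ.rowLen i ↔ i < μ.colLen j :=
  YoungDiagram.mem_iff_lt_rowLen.symm.trans YoungDiagram.mem_iff_lt_colLen

lemma rowLen_eq_zero (hμ : μ.colLen 0 ≤ N) {i : ℕ} (hi : N ≤ i) : μ.rowLen i = 0 :=
  Nat.eq_zero_of_not_pos fun hpos => (hμ.trans hi).not_gt (lt_rowLen_iff_lt_colLen.mp hpos)

@[to_additive]
lemma prod_cells_eq_prod_rows {M : Type*} [CommMonoid M] (hμ : μ.colLen 0 ≤ N)
    (f : ℕ × ℕ → M) :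
    ∏ s ∈ μ.cells, f s = ∏ i : Fin N, ∏ j ∈ range (μ.rowLen i), f (i, j) := by
  rw [Fin.prod_univ_eq_prod_range (fun i => ∏ j ∈ range (μ.rowLen i), f (i, j))]
  refine prod_finset_product _ _ _ fun s => ?_
  rw [YoungDiagram.mem_cells, ← Prod.mk.eta (p := s), YoungDiagram.mem_iff_lt_rowLen, mem_range,
    mem_range]
  refine ⟨fun hs => ⟨?_, hs⟩, And.right⟩
  by_contra! hN
  simp [rowLen_eq_zero hμ hN] at hs

/-- The beta numbers `λᵢ + N - i` (`1 ≤ i ≤ N`) of a partition `λ` with at most `N` parts,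
indexed from `0`. -/
def betaNumber (μ : YoungDiagram) (N : ℕ) (i : Fin N) : ℕ := μ.rowLen i + i.rev

lemma strictAnti_betaNumber (μ : YoungDiagram) (N : ℕ) : StrictAnti (betaNumber μ N) :=
  fun i k hik => add_lt_add_of_le_of_lt (μ.rowLen_anti i k hik.le) (Fin.rev_lt_rev.mpr hik)

/-- The numbers `N + j - cⱼ` (`j ≥ 0`), with `cⱼ` the length of the `j`-th column, which fill the
gaps between the beta numbers. The subtraction does not truncate when `μ` has at most `N` rows. -/
def gapNumber (μ : YoungDiagram) (N j : ℕ) : ℕ := N + j - μ.colLen j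

lemma strictMono_gapNumber (hμ : μ.colLen 0 ≤ N) : StrictMono (gapNumber μ N) := by
  intro j k hjk
  have hanti := μ.colLen_anti j k hjk.le
  have hle := μ.colLen_anti 0 j j.zero_le
  unfold gapNumber
  lia

lemma gapNumber_lt_betaNumber {i : Fin N} {j : ℕ} (hj : j < μ.rowLen i) :
    gapNumber μ N j < betaNumber μ N i := by
  have hcol := lt_rowLen_iff_lt_colLen.mp hj
  rw [gapNumber, betaNumber, Fin.val_rev]
  lia

lemma betaNumber_lt_gapNumber {i : Fin N} {j : ℕ} (hj : μ.rowLen i ≤ j) :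
    betaNumber μ N i < gapNumber μ N j := by
  have hcol : μ.colLen j ≤ i := not_lt.mp (mt lt_rowLen_iff_lt_colLen.mpr hj.not_gt)
  rw [gapNumber, betaNumber, Fin.val_rev]
  lia

lemma hookLen_eq_betaNumber_sub_gapNumber (hμ : μ.colLen 0 ≤ N) {i : Fin N} {j : ℕ}
    (hj : j < μ.rowLen i) : hookLen μ (i, j) = betaNumber μ N i - gapNumber μ N j := by
  have hcol := lt_rowLen_iff_lt_colLen.mp hj
  have hle := μ.colLen_anti 0 j j.zero_le
  rw [hookLen, gapNumber, betaNumber, Fin.val_rev]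
  lia

lemma disjoint_image_gapNumber_image_betaNumber (μ : YoungDiagram) (s : Finset ℕ)
    (t : Finset (Fin N)) : Disjoint (s.image (gapNumber μ N)) (t.image (betaNumber μ N)) := by
  simp only [disjoint_left, mem_image, not_exists, not_and]
  rintro _ ⟨j, -, rfl⟩ k - heq
  rcases lt_or_ge j (μ.rowLen k) with hj | hj
  · exact (gapNumber_lt_betaNumber hj).ne' heq
  · exact (betaNumber_lt_gapNumber hj).ne heq

lemma image_gapNumber_union_image_betaNumber (hμ : μ.colLen 0 ≤ N) (i : Fin N) :
    (range (μ.rowLen i)).image (gapNumber μ N) ∪ (Ioi i).image (betaNumber μ N) =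
      range (betaNumber μ N i) := by
  refine eq_of_subset_of_card_le ?_ ?_
  · simp only [union_subset_iff, image_subset_iff, mem_range, mem_Ioi]
    exact ⟨fun j => gapNumber_lt_betaNumber, fun k hk => strictAnti_betaNumber μ N hk⟩
  · rw [card_union_of_disjoint (disjoint_image_gapNumber_image_betaNumber μ _ _),
      card_image_of_injective _ (strictMono_gapNumber hμ).injective,
      card_image_of_injective _ (strictAnti_betaNumber μ N).injective, card_range, card_range,
      Fin.card_Ioi, betaNumber, Fin.val_rev]
    lia

lemma prod_hookLen_row {R : Type*} [CommRing R] (x : R) (hμ : μ.colLen 0 ≤ N) (i : Fin N) :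
    (∏ j ∈ range (μ.rowLen i), (1 - x ^ hookLen μ (i, j))) *
        ∏ k ∈ Ioi i, (1 - x ^ (betaNumber μ N i - betaNumber μ N k)) =
      qPochhammer x x (betaNumber μ N i) := by
  have hhook : ∏ j ∈ range (μ.rowLen i), (1 - x ^ hookLen μ (i, j)) =
      ∏ j ∈ range (μ.rowLen i), (1 - x ^ (betaNumber μ N i - gapNumber μ N j)) :=
    prod_congr rfl fun j hj => by
      rw [hookLen_eq_betaNumber_sub_gapNumber hμ (mem_range.mp hj)]
  rw [hhook, qPochhammer_self_eq_prod_pow_sub, ← image_gapNumber_union_image_betaNumber hμ i,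
    prod_union (disjoint_image_gapNumber_image_betaNumber μ _ _),
    prod_image (strictMono_gapNumber hμ).injective.injOn,
    prod_image (strictAnti_betaNumber μ N).injective.injOn]

lemma prod_content_row {K : Type*} [Field K] (x : K) (μ : YoungDiagram) (i : Fin N) :
    (∏ j ∈ range (μ.rowLen i), (1 - x ^ ((N : ℤ) + ((j : ℤ) - (i : ℤ))))) *
        qPochhammer x x i.rev = qPochhammer x x (betaNumber μ N i) := by
  rw [betaNumber, add_comm (μ.rowLen i), qPochhammer_add, mul_comm]
  refine congrArg _ (prod_congr rfl fun j _ => ?_)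
  have hexp : (N : ℤ) + ((j : ℤ) - (i : ℤ)) = (i.rev + 1 + j : ℕ) := by
    rw [Fin.val_rev]
    lia
  rw [hexp, zpow_natCast, pow_add, pow_succ']

lemma prod_cells_hookLen {R : Type*} [CommRing R] (x : R) (hμ : μ.colLen 0 ≤ N) :
    (∏ s ∈ μ.cells, (1 - x ^ hookLen μ s)) *
        ∏ i, ∏ k ∈ Ioi i, (1 - x ^ (betaNumber μ N i - betaNumber μ N k)) =
      ∏ i, qPochhammer x x (betaNumber μ N i) := by
  rw [prod_cells_eq_prod_rows hμ, ← prod_mul_distrib]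
  exact prod_congr rfl fun i _ => prod_hookLen_row x hμ i

lemma prod_cells_content {K : Type*} [Field K] (x : K) (hμ : μ.colLen 0 ≤ N) :
    (∏ s ∈ μ.cells, (1 - x ^ ((N : ℤ) + ((s.2 : ℤ) - (s.1 : ℤ))))) *
        ∏ i : Fin N, qPochhammer x x i =
      ∏ i, qPochhammer x x (betaNumber μ N i) := by
  rw [prod_cells_eq_prod_rows hμ, ← Equiv.prod_comp Fin.revPerm fun i : Fin N => qPochhammer x x i,
    ← prod_mul_distrib]
  exact prod_congr rfl fun i _ => prod_content_row x μ i

lemma antitone_add_val_of_strictAnti {l : Fin N → ℕ} (hl : StrictAnti l) :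
    Antitone fun i => l i + i := by
  cases N with
  | zero => exact fun i => i.elim0
  | succ N =>
    refine Fin.antitone_iff_succ_le.mpr fun i => ?_
    have hlt := hl i.castSucc_lt_succ
    simp only [Fin.val_succ, Fin.val_castSucc]
    lia

lemma exists_betaNumber_eq {l : Fin N → ℕ} (hl : StrictAnti l) :
    ∃ μ : YoungDiagram, μ.colLen 0 ≤ N ∧ betaNumber μ N = l := by
  have hanti := antitone_add_val_of_strictAnti hl
  have hrow : Antitone fun i : Fin N => l i - i.rev := fun i k hik => by
    have hle : l k + k ≤ l i + i := hanti hik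
    simp only [Fin.val_rev]
    lia
  refine ⟨.ofRowLens (List.ofFn fun i : Fin N => l i - i.rev) hrow.sortedGE_ofFn, ?_, ?_⟩
  · by_contra! hlt
    obtain ⟨hN, -⟩ := YoungDiagram.mem_ofRowLens.mp (YoungDiagram.mem_iff_lt_colLen.mpr hlt)
    simp at hN
  · ext i
    have hrev : (i.rev : ℕ) ≤ l i := by
      have hlast : l ⟨N - 1, Nat.sub_one_lt_of_lt i.isLt⟩ + (N - 1) ≤ l i + i :=
        hanti (Fin.mk_le_mk.mpr (Nat.le_sub_one_of_lt i.isLt))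
      rw [Fin.val_rev]
      lia
    have hlen := YoungDiagram.rowLen_ofRowLens (hw := hrow.sortedGE_ofFn)
      (i.cast (List.length_ofFn (f := fun i : Fin N => l i - i.rev)).symm)
    simp only [Fin.val_cast, Fin.getElem_fin, List.getElem_ofFn, Fin.eta] at hlen
    rw [betaNumber, hlen, Nat.sub_add_cancel hrev]

lemma eq_of_betaNumber_eq {ν : YoungDiagram} (hμ : μ.colLen 0 ≤ N) (hν : ν.colLen 0 ≤ N)
    (h : betaNumber μ N = betaNumber ν N) : μ = ν := by
  have hrow (i : ℕ) : μ.rowLen i = ν.rowLen i := by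
    rcases lt_or_ge i N with hi | hi
    · exact Nat.add_right_cancel (congrFun h ⟨i, hi⟩)
    · rw [rowLen_eq_zero hμ hi, rowLen_eq_zero hν hi]
  ext ⟨i, j⟩
  simp only [YoungDiagram.mem_cells, YoungDiagram.mem_iff_lt_rowLen, hrow]

/-- Partitions with at most `N` parts correspond to strictly decreasing `N`-tuples through their
beta numbers. -/
noncomputable def betaEquiv (N : ℕ) :
    {μ : YoungDiagram // μ.colLen 0 ≤ N} ≃ {l : Fin N → ℕ // StrictAnti l} :=
  .ofBijective (fun μ => ⟨betaNumber μ.1 N, strictAnti_betaNumber μ.1 N⟩)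
    ⟨fun μ ν h => Subtype.ext (eq_of_betaNumber_eq μ.2 ν.2 (congrArg Subtype.val h)), fun l => by
      obtain ⟨μ, hμ, h⟩ := exists_betaNumber_eq l.2
      exact ⟨⟨μ, hμ⟩, Subtype.ext h⟩⟩

end BetaNumbers

section Weight

variable {μ : YoungDiagram} {N : ℕ}

lemma nstat_eq_sum_rows (hμ : μ.colLen 0 ≤ N) : nstat μ = ∑ i : Fin N, i * μ.rowLen i := by
  simp [nstat, sum_cells_eq_sum_rows hμ, mul_comm]

lemma card_eq_sum_rows (hμ : μ.colLen 0 ≤ N) : μ.card = ∑ i : Fin N, μ.rowLen i := by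
  rw [YoungDiagram.card, card_eq_sum_ones, sum_cells_eq_sum_rows hμ]
  simp

lemma sum_two_mul_add_one (N : ℕ) : ∑ i : Fin N, (2 * (i : ℕ) + 1) = N ^ 2 := by
  induction N with
  | zero => rfl
  | succ N ih =>
    simp only [Fin.sum_univ_castSucc, Fin.val_castSucc, Fin.val_last, ih]
    ring

lemma sum_rev_mul_two_mul_add_one (N : ℕ) :
    ∑ i : Fin N, (i.rev : ℕ) * (2 * i + 1) = ∑ i : Fin N, (i : ℕ) ^ 2 := by
  induction N with
  | zero => rfl
  | succ N ih =>
    simp only [Fin.sum_univ_castSucc, Fin.rev_castSucc, Fin.val_succ, Fin.val_castSucc,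
      Fin.rev_last, Fin.val_zero, Fin.val_last, add_mul, one_mul, zero_mul, add_zero,
      sum_add_distrib, ih]
    rw [← sum_add_distrib, sum_two_mul_add_one]

lemma two_mul_nstat_add_card (hμ : μ.colLen 0 ≤ N) :
    2 * nstat μ + μ.card + ∑ i : Fin N, (i : ℕ) ^ 2 =
      ∑ i, betaNumber μ N i + 2 * ∑ i, i * betaNumber μ N i := by
  rw [nstat_eq_sum_rows hμ, card_eq_sum_rows hμ, ← sum_rev_mul_two_mul_add_one, mul_sum, mul_sum,
    ← sum_add_distrib, ← sum_add_distrib, ← sum_add_distrib]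
  refine sum_congr rfl fun i _ => ?_
  rw [betaNumber]
  ring

/-- The summand of the hook-content sum attached to `μ`, in the variable `x = q⁻¹`. -/
noncomputable def hookContentWeight {K : Type*} [Field K] (x : K) (N : ℕ) (μ : YoungDiagram) : K :=
  x ^ (2 * nstat μ + μ.card) *
    ∏ s ∈ μ.cells, (1 - x ^ ((N : ℤ) + ((s.2 : ℤ) - (s.1 : ℤ)))) / (1 - x ^ hookLen μ s) ^ 2

lemma hookContentWeight_eq_zero {K : Type*} [Field K] (x : K) (hμ : N < μ.colLen 0) :
    hookContentWeight x N μ = 0 := by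
  have hcell : (N, 0) ∈ μ.cells := (μ.mem_cells _).mpr (YoungDiagram.mem_iff_lt_colLen.mpr hμ)
  rw [hookContentWeight, prod_eq_zero hcell (by simp), mul_zero]

variable {𝕜 : Type*} [NormedField 𝕜] {x : 𝕜}

lemma hookContentWeight_mul (hx : ‖x‖ < 1) (hμ : μ.colLen 0 ≤ N) :
    hookContentWeight x N μ * ∏ i : Fin N, (qPochhammer x x i * x ^ ((i : ℕ) ^ 2)) =
      (∏ i, x ^ betaNumber μ N i / qPochhammer x x (betaNumber μ N i)) *
        (Matrix.vandermonde fun i => x ^ betaNumber μ N i).det ^ 2 := by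
  have hhook := prod_cells_hookLen x hμ
  have hcontent := prod_cells_content x hμ
  have hpoch : ∏ i, qPochhammer x x (betaNumber μ N i) ≠ 0 :=
    prod_ne_zero_iff.mpr fun i _ => qPochhammer_ne_zero hx hx.le _
  have hexp : x ^ (2 * nstat μ + μ.card) * x ^ (∑ i : Fin N, (i : ℕ) ^ 2) =
      x ^ (∑ i, betaNumber μ N i) * (x ^ (∑ i, i * betaNumber μ N i)) ^ 2 := by
    rw [← pow_mul, ← pow_add, ← pow_add, two_mul_nstat_add_card hμ, mul_comm 2]
  rw [hookContentWeight, det_vandermonde_pow_of_antitone x (strictAnti_betaNumber μ N).antitone,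
    prod_div_distrib, prod_pow, prod_mul_distrib, prod_div_distrib, prod_pow_eq_pow_sum,
    prod_pow_eq_pow_sum, mul_pow, div_mul_eq_mul_div,
    ← mul_assoc (x ^ ∑ i, betaNumber μ N i), ← hexp]
  rw [← hhook] at hcontent hpoch ⊢
  have hhook₀ := left_ne_zero_of_mul hpoch
  field_simp
  linear_combination x ^ (2 * nstat μ + μ.card) * x ^ (∑ i : Fin N, (i : ℕ) ^ 2) * hcontent

variable [CompleteSpace 𝕜]

theorem hasSum_hookContentWeight (hx₀ : x ≠ 0) (hx : ‖x‖ < 1) (N : ℕ) :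
    HasSum (hookContentWeight x N) (∏ r : Fin N, eulerSeries x (x * x ^ (r : ℕ))) := by
  have hsupport : Function.support (hookContentWeight x N) ⊆ {μ | μ.colLen 0 ≤ N} := fun μ hμ =>
    not_lt.mp fun hlt => hμ (hookContentWeight_eq_zero x hlt)
  have hne : ∏ i : Fin N, (qPochhammer x x i * x ^ ((i : ℕ) ^ 2)) ≠ 0 :=
    prod_ne_zero_iff.mpr fun i _ =>
      mul_ne_zero (qPochhammer_ne_zero hx hx.le i) (pow_ne_zero _ hx₀)
  rw [← hasSum_subtype_iff_of_support_subset hsupport, ← hasSum_mul_right_iff hne]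
  exact ((betaEquiv N).hasSum_iff.mpr (hasSum_prod_mul_sq_det_vandermonde hx)).congr_fun
    fun μ => hookContentWeight_mul hx μ.2

theorem hasProd_inv_one_sub_pow (hx : ‖x‖ < 1) (N : ℕ) :
    HasProd (fun p : Fin N × ℕ => (1 - x ^ ((p.1 : ℕ) + 1 + p.2))⁻¹)
      (∏ r : Fin N, eulerSeries x (x * x ^ (r : ℕ))) := by
  simp_rw [pow_add x (_ + 1), pow_succ']
  exact hasProd_prod_of_fintype fun r : Fin N =>
    hasProd_inv_one_sub_mul_pow hx (norm_mul_pow_lt_one hx hx.le r)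

end Weight

theorem stmt_8_general {𝕜 : Type*} [NormedField 𝕜] [CompleteSpace 𝕜] (q : 𝕜) (hq : 1 < ‖q‖)
    (N : ℕ) :
    ∃ S : 𝕜,
      HasSum (fun μ : YoungDiagram =>
        q ^ (-(2 * (nstat μ : ℤ) + (μ.card : ℤ))) *
          ∏ s ∈ μ.cells,
            (1 - q ^ (-((N : ℤ) + ((s.2 : ℤ) - (s.1 : ℤ))))) /
              (1 - q ^ (-(hookLen μ s : ℤ))) ^ 2) S ∧
      HasProd (fun p : Fin N × ℕ =>
        (1 - q ^ (-(((p.1 : ℕ) : ℤ) + 1 + (p.2 : ℤ))))⁻¹) S := by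
  have hx₀ : q⁻¹ ≠ 0 := inv_ne_zero (norm_pos_iff.mp (one_pos.trans hq))
  have hx : ‖q⁻¹‖ < 1 := by rw [norm_inv]; exact inv_lt_one_of_one_lt₀ hq
  refine ⟨_, (hasSum_hookContentWeight hx₀ hx N).congr_fun fun μ => ?_,
    (hasProd_inv_one_sub_pow hx N).congr_fun fun p => ?_⟩
  · simp only [hookContentWeight, ← inv_zpow', ← zpow_natCast]
    push_cast
    rfl
  · rw [← inv_zpow', ← zpow_natCast]
    push_cast
    rfl

/-- For real `q > 1` and positive integer `N`:
`∑_λ q^{−(2n(λ)+|λ|)} ∏_{s∈λ} (1 − q^{−(N+c(s))})/(1 − q^{−h(s)})²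
  = ∏_{r=1}^N ∏_{t=0}^∞ 1/(1 − q^{−(r+t)})`,
the sum being over all partitions of all nonnegative integers, with
`c(s) = j − i` the content of the cell `s`.  Both sides converge. -/
theorem stmt_8 (q : ℝ) (hq : 1 < q) (N : ℕ) (hN : 0 < N) :
    ∃ S : ℝ,
      HasSum (fun μ : YoungDiagram =>
        q ^ (-(2 * (nstat μ : ℤ) + (μ.card : ℤ))) *
          ∏ s ∈ μ.cells,
            (1 - q ^ (-((N : ℤ) + ((s.2 : ℤ) - (s.1 : ℤ))))) /
              (1 - q ^ (-(hookLen μ s : ℤ))) ^ 2) S ∧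
      HasProd (fun p : Fin N × ℕ =>
        (1 - q ^ (-(((p.1 : ℕ) : ℤ) + 1 + (p.2 : ℤ))))⁻¹) S :=
  stmt_8_general q (by rwa [Real.norm_of_nonneg (by linarith)]) N
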